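/- arXiv:1106.5700 — 3 statements merged into one kernel-verified Lean document; each statement's English description precedes it below -/
import Mathlib

section
/- Let A be a stuttering-invariant TGBA and T a Kripke structure over the same set AP of atomic propositions, and let (q₁,a₁) →^{ac} (q₂,a₂) be a transition of the Symbolic Observation Product A▷T whose target (q₂,a₂) is an aggregate state (not a divergent state). Then for any state s₂ ∈ a₂ there exists a (possibly indirect) ancestor s₁ ∈ a₁ and states t₁,…,t_n ∈ a₂ such that (q₁,s₁) →^{ac} (q₂,t₁) → (q₂,t₂) → ⋯ → (q₂,t_n) → (q₂,s₂) is a sequence of transitions of the stuttering synchronized product A⊗̃T. -/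
open scoped Classical

/-- Boolean formulas over atomic propositions of type `α`. -/
inductive BForm (α : Type) : Type
  | tru : BForm α
  | fls : BForm α
  | var : α → BForm α
  | band : BForm α → BForm α → BForm α
  | bor : BForm α → BForm α → BForm α
  | bnot : BForm α → BForm α

namespace BForm

variable {α : Type}

/-- Evaluation of a Boolean formula under an assignment. -/
def eval : BForm α → (α → Bool) → Bool
  | tru, _ => true
  | fls, _ => false
  | var a, ρ => ρ a
  | band f g, ρ => f.eval ρ && g.eval ρ
  | bor f g, ρ => f.eval ρ || g.eval ρ
  | bnot f, ρ => !(f.eval ρ)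

/-- Free variables (occurring atomic propositions) of a Boolean formula. -/
def FV : BForm α → Set α
  | tru => ∅
  | fls => ∅
  | var a => {a}
  | band f g => f.FV ∪ g.FV
  | bor f g => f.FV ∪ g.FV
  | bnot f => f.FV

/-- Satisfiability of a Boolean formula. -/
def Sat (f : BForm α) : Prop := ∃ ρ : α → Bool, f.eval ρ = true

/-- The literal describing the value of the assignment `ρ` on the proposition `a`. -/
def lit (ρ : α → Bool) (a : α) : BForm α := if ρ a then var a else bnot (var a)

end BForm

/-- The formula (a conjunction of literals) encoding the restriction of the
assignment `ρ` to the finite set `AP`: the interpretation of an assignment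
as a Boolean formula. -/
noncomputable def assignForm {α : Type} (AP : Finset α) (ρ : α → Bool) : BForm α :=
  (AP.toList.map (BForm.lit ρ)).foldr BForm.band BForm.tru

/-- `ρ ≡_E ρ'`: the two assignments agree on all propositions of `E`. -/
def AgreeOn {α : Type} (E : Set α) (ρ ρ' : α → Bool) : Prop := ∀ a ∈ E, ρ a = ρ' a

/-- Restriction of an assignment to the set `E` (`false` outside of `E`). -/
noncomputable def restrS {α : Type} (E : Set α) (ρ : α → Bool) : α → Bool :=
  fun p => if p ∈ E then ρ p else false

/-- A Transition-based Generalized Büchi Automaton over atomic propositions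
drawn from `α`, with alphabet `AP`, state set `Q`, acceptance conditions `F`,
transition relation `δ ⊆ Q × B(AP) × 2^F × Q` and initial state `init`. -/
structure TGBA (α : Type) where
  AP : Finset α
  Q : Type
  F : Type
  init : Q
  δ : Set (Q × BForm α × Set F × Q)

/-- A Kripke structure over atomic propositions drawn from `α`, with alphabet
`AP`, states `S` labeled by assignments via `lab`, transition relation `Δ`
and initial state `init`. -/
structure Kripke (α : Type) where
  AP : Finset α
  S : Type
  lab : S → α → Bool
  Δ : Set (S × S)
  init : S

namespace TGBA

variable {α : Type}

/-- Well-formedness: every transition label is a satisfiable formula over `AP`. -/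
def WF (A : TGBA α) : Prop := ∀ t ∈ A.δ, (t.2.1).FV ⊆ ↑A.AP ∧ (t.2.1).Sat

/-- A run: an infinite sequence of consecutive transitions starting at the
initial state. -/
def IsRun (A : TGBA α) (π : ℕ → A.Q × BForm α × Set A.F × A.Q) : Prop :=
  (π 0).1 = A.init ∧ ∀ i, π i ∈ A.δ ∧ (π i).2.2.2 = (π (i + 1)).1

/-- An accepting run: a run visiting every acceptance condition infinitely often. -/
def IsAccRun (A : TGBA α) (π : ℕ → A.Q × BForm α × Set A.F × A.Q) : Prop :=
  A.IsRun π ∧ ∀ c : A.F, ∀ i : ℕ, ∃ j, i ≤ j ∧ c ∈ (π j).2.2.1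

/-- `Acc(A) ≠ ∅`: the automaton has an accepting run. -/
def HasAccRun (A : TGBA α) : Prop := ∃ π, A.IsAccRun π

/-- The language of the TGBA: the infinite words compatible with some accepting run. -/
def Lang (A : TGBA α) : Set (ℕ → α → Bool) :=
  {w | ∃ π, A.IsAccRun π ∧ ∀ i, ((π i).2.1).eval (w i) = true}

/-- One-step successor relation between automaton states. -/
def Step (A : TGBA α) (q q' : A.Q) : Prop := ∃ f ac, (q, f, ac, q') ∈ A.δ

/-- Reachability between automaton states. -/
def Reach (A : TGBA α) : A.Q → A.Q → Prop := Relation.ReflTransGen A.Step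

/-- `FV(q)`: the union of the free variables of the labels of all transitions
reachable from `q`. -/
def FVq (A : TGBA α) (q : A.Q) : Set α :=
  {p | ∃ t ∈ A.δ, A.Reach q t.1 ∧ p ∈ (t.2.1).FV}

/-- There is some transition between the two states. -/
def HasTrans (A : TGBA α) (p₁ p₂ : A.Q) : Prop := ∃ f ac, (p₁, f, ac, p₂) ∈ A.δ

/-- There is a transition with acceptance set `ac` between the two states. -/
def HasTransAc (A : TGBA α) (p₁ : A.Q) (ac : Set A.F) (p₂ : A.Q) : Prop :=
  ∃ f, (p₁, f, ac, p₂) ∈ A.δ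

end TGBA

/-- Prepend a finite word to an infinite word. -/
def appendω {β : Type} (u : List β) (v : ℕ → β) : ℕ → β := fun n =>
  if h : n < u.length then u.get ⟨n, h⟩ else v (n - u.length)

/-- A language of infinite words is stuttering-invariant. -/
def StutterInvariantLang {β : Type} (L : Set (ℕ → β)) : Prop :=
  ∀ (u : List β) (ρ : β) (v : ℕ → β), appendω (u ++ [ρ]) v ∈ L ↔ appendω (u ++ [ρ, ρ]) v ∈ L

/-- A TGBA is stuttering-invariant iff its language is. -/
def TGBA.StutterInvariant {α : Type} (A : TGBA α) : Prop := StutterInvariantLang A.Lang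

/-- Two infinite words are stuttering equivalent: they are equal after collapsing
consecutive repeated letters, as witnessed by matching block decompositions. -/
def StutterEquiv {β : Type} (w w' : ℕ → β) : Prop :=
  ∃ ι κ : ℕ → ℕ, ι 0 = 0 ∧ κ 0 = 0 ∧ StrictMono ι ∧ StrictMono κ ∧
    ∀ k i j, ι k ≤ i → i < ι (k + 1) → κ k ≤ j → j < κ (k + 1) → w i = w' j

/-- Two languages are stuttering equivalent: every word of either language is
stuttering equivalent to some word of the other. -/
def LangStutterEquiv {β : Type} (L L' : Set (ℕ → β)) : Prop :=
  (∀ w ∈ L, ∃ w' ∈ L', StutterEquiv w w') ∧ ∀ w' ∈ L', ∃ w ∈ L, StutterEquiv w w'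

namespace Kripke

variable {α : Type}

/-- `SuccF(a, P)`: successors of states of `a`, filtered to keep only those
whose label satisfies `P`. -/
def SuccF (T : Kripke α) (a : Set T.S) (P : (α → Bool) → Prop) : Set T.S :=
  {s' | ∃ s ∈ a, (s, s') ∈ T.Δ ∧ P (T.lab s')}

/-- `ReachF(a, P)`: the least superset of `a` closed under `SuccF(·, P)`. -/
def ReachF (T : Kripke α) (a : Set T.S) (P : (α → Bool) → Prop) : Set T.S :=
  ⋂₀ {b | a ⊆ b ∧ T.SuccF b P ⊆ b}

/-- `FSucc(a, P)`: successors of the states of `a` whose label satisfies `P`. -/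
def FSucc (T : Kripke α) (a : Set T.S) (P : (α → Bool) → Prop) : Set T.S :=
  {s' | ∃ s ∈ a, (s, s') ∈ T.Δ ∧ P (T.lab s)}

/-- `FReach(a, P)`: the least superset of `a` closed under `FSucc(·, P)`. -/
def FReach (T : Kripke α) (a : Set T.S) (P : (α → Bool) → Prop) : Set T.S :=
  ⋂₀ {b | a ⊆ b ∧ T.FSucc b P ⊆ b}

/-- The label of (a representative state of) an aggregate. -/
noncomputable def aggLab (T : Kripke α) (a : Set T.S) : α → Bool :=
  if h : a.Nonempty then T.lab h.some else fun _ => false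

/-- Homogeneity of a set of states w.r.t. the observed propositions `E`. -/
def Homog (T : Kripke α) (E : Set α) (a : Set T.S) : Prop :=
  ∀ s ∈ a, ∀ s' ∈ a, AgreeOn E (T.lab s) (T.lab s')

/-- `a` is a (nonempty, homogeneous, saturated) aggregate w.r.t. `E`. -/
def IsAgg (T : Kripke α) (E : Set α) (a : Set T.S) : Prop :=
  a.Nonempty ∧ T.Homog E a ∧ a = T.ReachF a fun ρ => AgreeOn E ρ (T.aggLab a)

/-- `a` contains a cycle of `Δ`. -/
def HasCycle (T : Kripke α) (a : Set T.S) : Prop :=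
  ∃ s ∈ a, Relation.TransGen (fun x y => x ∈ a ∧ y ∈ a ∧ (x, y) ∈ T.Δ) s s

end Kripke

/-- Transition relation of the synchronized product `A ⊗ T`. -/
def synchδ {α : Type} (A : TGBA α) (T : Kripke α) :
    Set ((A.Q × T.S) × BForm α × Set A.F × (A.Q × T.S)) :=
  {t | ∃ (q₁ q₂ : A.Q) (s₁ s₂ : T.S) (ac : Set A.F),
    t = ((q₁, s₁), assignForm T.AP (T.lab s₁), ac, (q₂, s₂)) ∧ (s₁, s₂) ∈ T.Δ ∧
    ∃ g : BForm α, (q₁, g, ac, q₂) ∈ A.δ ∧ g.eval (T.lab s₁) = true}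

/-- The synchronized product `A ⊗ T` of a TGBA and a Kripke structure. -/
def synchProd {α : Type} (A : TGBA α) (T : Kripke α) : TGBA α where
  AP := T.AP
  Q := A.Q × T.S
  F := A.F
  init := (A.init, T.init)
  δ := synchδ A T

/-- The stuttering synchronized product `A ⊗̃ T`: the synchronized product
together with the extra stuttering transitions. -/
def stutProd {α : Type} (A : TGBA α) (T : Kripke α) : TGBA α where
  AP := T.AP
  Q := A.Q × T.S
  F := A.F
  init := (A.init, T.init)
  δ := synchδ A T ∪
    {t | ∃ q₁ s₁ s₂,
      t = ((q₁, s₁), assignForm T.AP (T.lab s₁), (∅ : Set A.F), (q₁, s₂)) ∧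
      (s₁, s₂) ∈ T.Δ ∧ AgreeOn (A.FVq q₁) (T.lab s₁) (T.lab s₂)}

/-- The Symbolic Observation Graph of `T` over the observed propositions `E`:
a Kripke structure whose states are aggregates (`Sum.inl`) and divergent
states (`Sum.inr`, assignments over `E`). -/
noncomputable def SOG {α : Type} (T : Kripke α) (E : Finset α) : Kripke α where
  AP := E
  S := Set T.S ⊕ ({x // x ∈ E} → Bool)
  lab := fun x =>
    match x with
    | Sum.inl a => restrS ↑E (T.aggLab a)
    | Sum.inr l => fun p => if h : p ∈ E then l ⟨p, h⟩ else false
  Δ := {pr |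
    (∃ a a' : Set T.S, pr = (Sum.inl a, Sum.inl a') ∧ T.IsAgg ↑E a ∧ T.IsAgg ↑E a' ∧
      a' = T.ReachF (T.SuccF a (fun ρ => AgreeOn ↑E ρ (T.aggLab a')) \ a)
          fun ρ => AgreeOn ↑E ρ (T.aggLab a')) ∨
    (∃ (a : Set T.S) (l : {x // x ∈ E} → Bool), pr = (Sum.inl a, Sum.inr l) ∧
      T.IsAgg ↑E a ∧ T.HasCycle a ∧ ∀ p : {x // x ∈ E}, l p = T.aggLab a ↑p) ∨
    ∃ l : {x // x ∈ E} → Bool, pr = (Sum.inr l, Sum.inr l)}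
  init := Sum.inl (T.ReachF {T.init} fun ρ => AgreeOn ↑E ρ (T.lab T.init))

/-- The finite set of propositions of `AP` observable from `q`. -/
noncomputable def fvFinset {α : Type} (A : TGBA α) (q : A.Q) : Finset α :=
  A.AP.filter fun p => p ∈ A.FVq q

/-- The Symbolic Observation Product `A ▷ T`: a TGBA whose states pair a state of
`A` with either an aggregate (`Sum.inl`) or a divergent state (`Sum.inr`, an
assignment over `FV(q)`, canonically `false` outside `FV(q)`). -/
noncomputable def SOP {α : Type} (A : TGBA α) (T : Kripke α) : TGBA α where
  AP := A.AP
  Q := A.Q × (Set T.S ⊕ (α → Bool))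
  F := A.F
  init := (A.init,
    Sum.inl (T.ReachF {T.init} fun ρ => AgreeOn (A.FVq A.init) ρ (T.lab T.init)))
  δ := {t |
    -- aggregate to aggregate
    (∃ (q₁ q₂ : A.Q) (a₁ a₂ : Set T.S) (ac : Set A.F),
      t = ((q₁, Sum.inl a₁), assignForm (fvFinset A q₁) (T.aggLab a₁), ac,
           (q₂, Sum.inl a₂)) ∧
      T.IsAgg (A.FVq q₁) a₁ ∧ T.IsAgg (A.FVq q₂) a₂ ∧
      (∃ f : BForm α, (q₁, f, ac, q₂) ∈ A.δ ∧
        f.eval (restrS (A.FVq q₁) (T.aggLab a₁)) = true) ∧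
      ∃ l' : α → Bool,
        a₂ = T.ReachF (T.SuccF a₁ (fun ρ => AgreeOn (A.FVq q₂) ρ l') \ a₁)
            fun ρ => AgreeOn (A.FVq q₂) ρ l') ∨
    -- aggregate to divergent
    (∃ (q₁ q₂ : A.Q) (a : Set T.S) (l₂ : α → Bool) (ac : Set A.F),
      t = ((q₁, Sum.inl a), assignForm (fvFinset A q₁) (T.aggLab a), ac,
           (q₂, Sum.inr l₂)) ∧
      T.IsAgg (A.FVq q₁) a ∧ T.HasCycle a ∧
      l₂ = restrS (A.FVq q₂) (T.aggLab a) ∧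
      ∃ f : BForm α, (q₁, f, ac, q₂) ∈ A.δ ∧
        f.eval (restrS (A.FVq q₁) (T.aggLab a)) = true) ∨
    -- divergent to divergent
    ∃ (q₁ q₂ : A.Q) (l₁ l₂ : α → Bool) (ac : Set A.F),
      t = ((q₁, Sum.inr l₁), assignForm (fvFinset A q₁) l₁, ac, (q₂, Sum.inr l₂)) ∧
      l₁ = restrS (A.FVq q₁) l₁ ∧ l₂ = restrS (A.FVq q₂) l₁ ∧
      ∃ f : BForm α, (q₁, f, ac, q₂) ∈ A.δ ∧ f.eval l₁ = true}

/-- `SF(q, ac)` as a predicate on assignments: `ρ` satisfies the disjunction of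
the labels of the self-loops on `q` whose acceptance sets are included in `ac`. -/
def SFpred {α : Type} (A : TGBA α) (q : A.Q) (ac : Set A.F) : (α → Bool) → Prop :=
  fun ρ => ∃ (f : BForm α) (ac' : Set A.F), (q, f, ac', q) ∈ A.δ ∧ ac' ⊆ ac ∧ f.eval ρ = true

/-- The Self-Loop Aggregation Product `A ⊠ T`. -/
def SLAP {α : Type} (A : TGBA α) (T : Kripke α) : TGBA α where
  AP := ∅
  Q := A.Q × Set T.S
  F := A.F
  init := (A.init, T.FReach {T.init} (SFpred A A.init ∅))
  δ := {t | ∃ (q₁ q₂ : A.Q) (a₁ a₂ : Set T.S) (ac : Set A.F),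
    t = ((q₁, a₁), BForm.tru, ac, (q₂, a₂)) ∧ a₁.Nonempty ∧ a₂.Nonempty ∧
    ∃ f : BForm α, (q₁, f, ac, q₂) ∈ A.δ ∧ (q₁ = q₂ → ac ≠ ∅) ∧
      a₂ = T.FReach (T.FSucc a₁ fun ρ => f.eval ρ = true) (SFpred A q₂ ac)}

/-!
Since `a₂` is the closure, under successors with a fixed value on `FV(q₂)`, of some successors of
states of `a₁`, every `s₂ ∈ a₂` is the end of a path of `T` that stays in `a₂` and starts at a
successor `t 0` of some `s₁ ∈ a₁`. The step from `s₁` to `t 0` is a transition of the synchronized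
product, because all the states of `a₁` agree on the propositions tested by the transitions leaving
`q₁`. The later steps are stuttering transitions, because all the states of `a₂` agree on `FV(q₂)`.
-/

theorem exists_seq_of_reflTransGen {β : Type*} {r : β → β → Prop} {a b : β}
    (h : Relation.ReflTransGen r a b) :
    ∃ (n : ℕ) (t : ℕ → β), t 0 = a ∧ t n = b ∧ ∀ i < n, r (t i) (t (i + 1)) := by
  induction h using Relation.ReflTransGen.head_induction_on with
  | refl => exact ⟨0, fun _ => b, rfl, rfl, fun _ hi => absurd hi (Nat.not_lt_zero _)⟩
  | @head a _ hstep _ ih =>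
    obtain ⟨n, t, rfl, hlast, ht⟩ := ih
    refine ⟨n + 1, fun i => Nat.casesOn i a t, rfl, hlast, ?_⟩
    rintro (_ | i) hi
    · exact hstep
    · exact ht i (Nat.lt_of_succ_lt_succ hi)

namespace BForm

variable {α : Type}

theorem eval_congr {f : BForm α} {ρ ρ' : α → Bool} (h : AgreeOn f.FV ρ ρ') :
    f.eval ρ = f.eval ρ' := by
  induction f with
  | tru => rfl
  | fls => rfl
  | var a => exact h a rfl
  | band f g ihf ihg =>
    exact congrArg₂ and (ihf fun p hp => h p (Or.inl hp)) (ihg fun p hp => h p (Or.inr hp))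
  | bor f g ihf ihg =>
    exact congrArg₂ or (ihf fun p hp => h p (Or.inl hp)) (ihg fun p hp => h p (Or.inr hp))
  | bnot f ih => exact congrArg not (ih h)

theorem eval_restrS {f : BForm α} {E : Set α} (h : f.FV ⊆ E) (ρ : α → Bool) :
    f.eval (restrS E ρ) = f.eval ρ :=
  eval_congr fun _ hp => if_pos (h hp)

end BForm

theorem TGBA.FV_subset_FVq {α : Type} {A : TGBA α} {q q' : A.Q} {f : BForm α} {ac : Set A.F}
    (h : (q, f, ac, q') ∈ A.δ) : f.FV ⊆ A.FVq q :=
  fun _ hp => ⟨_, h, Relation.ReflTransGen.refl, hp⟩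

namespace Kripke

variable {α : Type} {T : Kripke α} {a : Set T.S} {s : T.S}

section ReachF

variable {P : (α → Bool) → Prop}

theorem subset_reachF : a ⊆ T.ReachF a P :=
  Set.subset_sInter fun _ hb => hb.1

theorem succF_reachF_subset : T.SuccF (T.ReachF a P) P ⊆ T.ReachF a P := by
  rintro s' ⟨s, hs, hΔ, hP⟩ b hb
  exact hb.2 ⟨s, hs b hb, hΔ, hP⟩

theorem exists_reflTransGen_of_mem_reachF (hs : s ∈ T.ReachF a P) :
    ∃ s₀ ∈ a, Relation.ReflTransGen (fun x y => (x, y) ∈ T.Δ ∧ P (T.lab y)) s₀ s := by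
  refine hs {s | ∃ s₀ ∈ a, Relation.ReflTransGen (fun x y => (x, y) ∈ T.Δ ∧ P (T.lab y)) s₀ s}
    ⟨fun s₀ hs₀ => ⟨s₀, hs₀, .refl⟩, ?_⟩
  rintro s' ⟨_, ⟨s₀, hs₀, hpath⟩, hstep⟩
  exact ⟨s₀, hs₀, hpath.tail hstep⟩

theorem exists_path_of_mem_reachF (hs : s ∈ T.ReachF a P) :
    ∃ (n : ℕ) (t : ℕ → T.S), t 0 ∈ a ∧ t n = s ∧ (∀ i ≤ n, t i ∈ T.ReachF a P) ∧
      ∀ i < n, (t i, t (i + 1)) ∈ T.Δ := by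
  obtain ⟨_, h₀, hpath⟩ := exists_reflTransGen_of_mem_reachF hs
  obtain ⟨n, t, rfl, hlast, hstep⟩ := exists_seq_of_reflTransGen hpath
  refine ⟨n, t, h₀, hlast, fun i => ?_, fun i hi => (hstep i hi).1⟩
  induction i with
  | zero => exact fun _ => subset_reachF h₀
  | succ i ih => exact fun hi => succF_reachF_subset ⟨t i, ih (Nat.le_of_succ_le hi), hstep i hi⟩

end ReachF

theorem Homog.agreeOn_aggLab {E : Set α} (ha : T.Homog E a) (hs : s ∈ a) :
    AgreeOn E (T.lab s) (T.aggLab a) := by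
  have hne : a.Nonempty := ⟨s, hs⟩
  rw [aggLab, dif_pos hne]
  exact ha s hs _ hne.some_mem

theorem Homog.eval_restrS_aggLab {E : Set α} {f : BForm α} (ha : T.Homog E a) (hs : s ∈ a)
    (hf : f.FV ⊆ E) : f.eval (restrS E (T.aggLab a)) = f.eval (T.lab s) :=
  (BForm.eval_restrS hf _).trans
    (BForm.eval_congr fun p hp => (ha.agreeOn_aggLab hs p (hf hp)).symm)

end Kripke

section Products

variable {α : Type} {A : TGBA α} {T : Kripke α}

theorem stutProd.hasTransAc_of_eval {q₁ q₂ : A.Q} {f : BForm α} {ac : Set A.F} {s₁ s₂ : T.S}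
    (hδ : (q₁, f, ac, q₂) ∈ A.δ) (hΔ : (s₁, s₂) ∈ T.Δ) (hf : f.eval (T.lab s₁) = true) :
    (stutProd A T).HasTransAc (q₁, s₁) ac (q₂, s₂) :=
  ⟨_, Or.inl ⟨q₁, q₂, s₁, s₂, ac, rfl, hΔ, f, hδ, hf⟩⟩

theorem stutProd.hasTrans_of_agreeOn {q : A.Q} {s₁ s₂ : T.S} (hΔ : (s₁, s₂) ∈ T.Δ)
    (h : AgreeOn (A.FVq q) (T.lab s₁) (T.lab s₂)) : (stutProd A T).HasTrans (q, s₁) (q, s₂) :=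
  ⟨_, _, Or.inr ⟨q, s₁, s₂, rfl, hΔ, h⟩⟩

theorem SOP.hasTransAc_inl_inl_iff {q₁ q₂ : A.Q} {a₁ a₂ : Set T.S} {ac : Set A.F} :
    (SOP A T).HasTransAc (q₁, Sum.inl a₁) ac (q₂, Sum.inl a₂) ↔
      T.IsAgg (A.FVq q₁) a₁ ∧ T.IsAgg (A.FVq q₂) a₂ ∧
      (∃ f : BForm α, (q₁, f, ac, q₂) ∈ A.δ ∧
        f.eval (restrS (A.FVq q₁) (T.aggLab a₁)) = true) ∧
      ∃ l : α → Bool, a₂ = T.ReachF (T.SuccF a₁ (fun ρ => AgreeOn (A.FVq q₂) ρ l) \ a₁)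
        fun ρ => AgreeOn (A.FVq q₂) ρ l := by
  constructor
  · rintro ⟨_, ⟨_, _, _, _, _, heq, h⟩ | ⟨_, _, _, _, _, heq, -⟩ | ⟨_, _, _, _, _, heq, -⟩⟩
    · cases heq
      exact h
    · cases heq
    · cases heq
  · exact fun h => ⟨_, Or.inl ⟨q₁, q₂, a₁, a₂, ac, rfl, h⟩⟩

end Products

theorem stmt4_general {α : Type} (A : TGBA α) (T : Kripke α)
    (q₁ q₂ : A.Q) (a₁ a₂ : Set T.S) (ac : Set A.F)
    (ht : (SOP A T).HasTransAc (q₁, Sum.inl a₁) ac (q₂, Sum.inl a₂)) :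
    ∀ s₂ ∈ a₂, ∃ s₁ ∈ a₁, ∃ (n : ℕ) (t : ℕ → T.S),
      (∀ i ≤ n, t i ∈ a₂) ∧ t n = s₂ ∧
      (stutProd A T).HasTransAc (q₁, s₁) ac (q₂, t 0) ∧
      ∀ i < n, (stutProd A T).HasTrans (q₂, t i) (q₂, t (i + 1)) := by
  obtain ⟨⟨-, hom₁, -⟩, ⟨-, hom₂, -⟩, ⟨f, hδ, hf⟩, l, rfl⟩ := SOP.hasTransAc_inl_inl_iff.mp ht
  intro s₂ hs₂
  obtain ⟨n, t, ⟨⟨s₁, hs₁, hΔ₁, -⟩, -⟩, hlast, hmem, hΔ⟩ := Kripke.exists_path_of_mem_reachF hs₂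
  have hf₁ : f.eval (T.lab s₁) = true :=
    (hom₁.eval_restrS_aggLab hs₁ (TGBA.FV_subset_FVq hδ)).symm.trans hf
  exact ⟨s₁, hs₁, n, t, hmem, hlast, stutProd.hasTransAc_of_eval hδ hΔ₁ hf₁, fun i hi =>
    stutProd.hasTrans_of_agreeOn (hΔ i hi) (hom₂ _ (hmem i hi.le) _ (hmem (i + 1) hi))⟩

/-- Let `(q₁,a₁) →^{ac} (q₂,a₂)` be a transition of the Symbolic
Observation Product `A ▷ T` whose target is an aggregate state.  Then for any
state `s₂ ∈ a₂` there exist an ancestor `s₁ ∈ a₁` and states `t 0, …, t n ∈ a₂`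
with `t n = s₂` such that
`(q₁,s₁) →^{ac} (q₂,t 0) → (q₂,t 1) → ⋯ → (q₂,t n)` is a sequence of
transitions of the stuttering synchronized product `A ⊗̃ T`. -/
theorem stmt4 {α : Type} (A : TGBA α) (T : Kripke α)
    [Finite A.Q] [Finite A.F] [Nonempty A.F] [Finite T.S]
    (hwf : A.WF) (hAP : A.AP = T.AP) (hst : A.StutterInvariant)
    (q₁ q₂ : A.Q) (a₁ a₂ : Set T.S) (ac : Set A.F)
    (ht : (SOP A T).HasTransAc (q₁, Sum.inl a₁) ac (q₂, Sum.inl a₂)) :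
    ∀ s₂ ∈ a₂, ∃ s₁ ∈ a₁, ∃ (n : ℕ) (t : ℕ → T.S),
      (∀ i ≤ n, t i ∈ a₂) ∧ t n = s₂ ∧
      (stutProd A T).HasTransAc (q₁, s₁) ac (q₂, t 0) ∧
      ∀ i < n, (stutProd A T).HasTrans (q₂, t i) (q₂, t (i + 1)) :=
  stmt4_general A T q₁ q₂ a₁ a₂ ac ht
end

section
/- Let A be a TGBA over AP' and T a Kripke structure over AP ⊇ AP', and let (q₁,a₁) →^{ac} (q₂,a₂) be a transition of the Self-Loop Aggregation Product A⊠T. Then for any state s₂ ∈ a₂ there exists a (possibly indirect) ancestor s₁ ∈ a₁, states t₁,…,t_n ∈ a₂ and acceptance sets α₁,…,α_n with αᵢ ⊆ ac for all i, such that (q₁,s₁) →^{ac} (q₂,t₁) →^{α₁} (q₂,t₂) →^{α₂} ⋯ (q₂,t_n) →^{α_n} (q₂,s₂) is a sequence of transitions of the synchronized product A⊗T. -/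
open scoped Classical

/-!
Filtered reachability `FReach(a, P)` is reachability from `a` along the edges `s → s'` with
`λ(s) ⊨ P`. For `P = SF(q₂, ac)` such an edge is exactly the Kripke part of a transition
`(q₂, s) →^{β} (q₂, s')` of `A ⊗ T` with `β ⊆ ac`. So a state of
`a₂ = FReach(FSucc(a₁, f), SF(q₂, ac))` is joined to `FSucc(a₁, f)` by a path of such transitions,
all of whose states are in `a₂`, and the transition `q₁ →^{f, ac} q₂` of `A` leads from `a₁` to the
first state of this path.
-/

theorem reflTransGen_iff_exists_seq {σ : Type*} {r : σ → σ → Prop} {x y : σ} :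
    Relation.ReflTransGen r x y ↔
      ∃ (n : ℕ) (t : ℕ → σ), t 0 = x ∧ t n = y ∧ ∀ i < n, r (t i) (t (i + 1)) := by
  constructor
  · intro hxy
    induction hxy using Relation.ReflTransGen.head_induction_on with
    | refl => exact ⟨0, fun _ => y, rfl, rfl, fun i hi => absurd hi i.not_lt_zero⟩
    | @head x z hxz _ ih =>
      obtain ⟨n, t, rfl, hlast, hstep⟩ := ih
      refine ⟨n + 1, fun i => i.casesOn x t, rfl, hlast, fun i hi => ?_⟩
      cases i with
      | zero => exact hxz
      | succ i => exact hstep i (Nat.lt_of_succ_lt_succ hi)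
  · rintro ⟨n, t, rfl, rfl, hstep⟩
    exact (reflTransGen_of_succ_of_le (fun i j => r (t i) (t j))
      (fun i hi => hstep i hi.2) n.zero_le).lift t fun _ _ hij => hij

namespace Kripke

variable {α : Type} {T : Kripke α} {a : Set T.S} {P : (α → Bool) → Prop}

/-- The edges of `T` along which `FSucc(·, P)` and `FReach(·, P)` propagate. As in `FSucc`, the
filter `P` constrains the label of the source. -/
def FStep (T : Kripke α) (P : (α → Bool) → Prop) (s s' : T.S) : Prop :=
  (s, s') ∈ T.Δ ∧ P (T.lab s)

theorem subset_FReach : a ⊆ T.FReach a P :=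
  Set.subset_sInter fun _ hb => hb.1

theorem FReach_subset {b : Set T.S} (hab : a ⊆ b) (hb : T.FSucc b P ⊆ b) : T.FReach a P ⊆ b :=
  Set.sInter_subset_of_mem ⟨hab, hb⟩

theorem FSucc_FReach_subset : T.FSucc (T.FReach a P) P ⊆ T.FReach a P := by
  rintro s' ⟨s, hs, hstep⟩ b hb
  exact hb.2 ⟨s, hs b hb, hstep⟩

theorem mem_FReach_iff {s : T.S} :
    s ∈ T.FReach a P ↔ ∃ s₀ ∈ a, Relation.ReflTransGen (T.FStep P) s₀ s := by
  constructor
  · intro hs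
    refine FReach_subset (b := {s | ∃ s₀ ∈ a, Relation.ReflTransGen (T.FStep P) s₀ s}) ?_ ?_ hs
    · exact fun s hs => ⟨s, hs, .refl⟩
    · rintro s' ⟨s, ⟨s₀, hs₀, hreach⟩, hstep⟩
      exact ⟨s₀, hs₀, hreach.tail hstep⟩
  · rintro ⟨s₀, hs₀, hreach⟩
    induction hreach with
    | refl => exact subset_FReach hs₀
    | tail _ hstep ih => exact FSucc_FReach_subset ⟨_, ih, hstep⟩

theorem exists_seq_of_mem_FReach {s : T.S} (hs : s ∈ T.FReach a P) :
    ∃ (n : ℕ) (t : ℕ → T.S), t 0 ∈ a ∧ t n = s ∧ (∀ i ≤ n, t i ∈ T.FReach a P) ∧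
      ∀ i < n, T.FStep P (t i) (t (i + 1)) := by
  obtain ⟨_, hs₀, hreach⟩ := mem_FReach_iff.mp hs
  obtain ⟨n, t, rfl, hlast, hstep⟩ := reflTransGen_iff_exists_seq.mp hreach
  refine ⟨n, t, hs₀, hlast, fun i hi => mem_FReach_iff.mpr ⟨t 0, hs₀, ?_⟩, hstep⟩
  exact reflTransGen_iff_exists_seq.mpr ⟨i, t, rfl, rfl, fun j hj => hstep j (hj.trans_le hi)⟩

end Kripke

section Products

variable {α : Type} {A : TGBA α} {T : Kripke α} {q q₁ q₂ : A.Q} {ac : Set A.F}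

theorem synchProd_hasTransAc_iff {s₁ s₂ : T.S} :
    (synchProd A T).HasTransAc (q₁, s₁) ac (q₂, s₂) ↔
      ∃ g : BForm α, (q₁, g, ac, q₂) ∈ A.δ ∧ T.FStep (fun ρ => g.eval ρ = true) s₁ s₂ := by
  constructor
  · rintro ⟨_, _, _, _, _, _, heq, hΔ, g, hg, hev⟩
    cases heq
    exact ⟨g, hg, hΔ, hev⟩
  · rintro ⟨g, hg, hΔ, hev⟩
    exact ⟨_, q₁, q₂, s₁, s₂, ac, rfl, hΔ, g, hg, hev⟩

theorem SLAP_hasTransAc_iff {a₁ a₂ : Set T.S} :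
    (SLAP A T).HasTransAc (q₁, a₁) ac (q₂, a₂) ↔
      a₁.Nonempty ∧ a₂.Nonempty ∧ ∃ f : BForm α, (q₁, f, ac, q₂) ∈ A.δ ∧ (q₁ = q₂ → ac ≠ ∅) ∧
        a₂ = T.FReach (T.FSucc a₁ fun ρ => f.eval ρ = true) (SFpred A q₂ ac) := by
  constructor
  · rintro ⟨_, _, _, _, _, _, heq, htrans⟩
    cases heq
    exact htrans
  · exact fun htrans => ⟨BForm.tru, q₁, q₂, a₁, a₂, ac, rfl, htrans⟩

theorem FStep_SFpred_iff {s s' : T.S} :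
    T.FStep (SFpred A q ac) s s' ↔
      ∃ β ⊆ ac, (synchProd A T).HasTransAc (q, s) β (q, s') := by
  simp only [synchProd_hasTransAc_iff]
  constructor
  · rintro ⟨hΔ, g, β, hg, hβ, hev⟩
    exact ⟨β, hβ, g, hg, hΔ, hev⟩
  · rintro ⟨β, hβ, g, hg, hΔ, hev⟩
    exact ⟨hΔ, g, β, hg, hβ, hev⟩

end Products

theorem stmt10_general {α : Type} (A : TGBA α) (T : Kripke α)
    (q₁ q₂ : A.Q) (a₁ a₂ : Set T.S) (ac : Set A.F)
    (ht : (SLAP A T).HasTransAc (q₁, a₁) ac (q₂, a₂)) :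
    ∀ s₂ ∈ a₂, ∃ s₁ ∈ a₁, ∃ (n : ℕ) (t : ℕ → T.S) (αs : ℕ → Set A.F),
      (∀ i ≤ n, t i ∈ a₂) ∧ t n = s₂ ∧ (∀ i < n, αs i ⊆ ac) ∧
      (synchProd A T).HasTransAc (q₁, s₁) ac (q₂, t 0) ∧
      ∀ i < n, (synchProd A T).HasTransAc (q₂, t i) (αs i) (q₂, t (i + 1)) := by
  intro s₂ hs₂
  obtain ⟨-, -, f, hf, -, rfl⟩ := SLAP_hasTransAc_iff.mp ht
  obtain ⟨n, t, ⟨s₁, hs₁, hfirst⟩, hlast, hmem, hstep⟩ := Kripke.exists_seq_of_mem_FReach hs₂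
  choose! αs hαs htrans using fun i hi => FStep_SFpred_iff.mp (hstep i hi)
  exact ⟨s₁, hs₁, n, t, αs, hmem, hlast, hαs, synchProd_hasTransAc_iff.mpr ⟨f, hf, hfirst⟩, htrans⟩

/-- Let `(q₁,a₁) →^{ac} (q₂,a₂)` be a transition of the Self-Loop
Aggregation Product `A ⊠ T`.  Then for any state `s₂ ∈ a₂` there exist an
ancestor `s₁ ∈ a₁`, states `t 0, …, t n ∈ a₂` with `t n = s₂` and acceptance
sets `αs i ⊆ ac` such that
`(q₁,s₁) →^{ac} (q₂,t 0) →^{αs 0} (q₂,t 1) →^{αs 1} ⋯ →^{αs (n-1)} (q₂,t n)`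
is a sequence of transitions of the synchronized product `A ⊗ T`. -/
theorem stmt10 {α : Type} (A : TGBA α) (T : Kripke α)
    [Finite A.Q] [Finite A.F] [Nonempty A.F] [Finite T.S]
    (hwf : A.WF) (hAP : A.AP ⊆ T.AP)
    (q₁ q₂ : A.Q) (a₁ a₂ : Set T.S) (ac : Set A.F)
    (ht : (SLAP A T).HasTransAc (q₁, a₁) ac (q₂, a₂)) :
    ∀ s₂ ∈ a₂, ∃ s₁ ∈ a₁, ∃ (n : ℕ) (t : ℕ → T.S) (αs : ℕ → Set A.F),
      (∀ i ≤ n, t i ∈ a₂) ∧ t n = s₂ ∧ (∀ i < n, αs i ⊆ ac) ∧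
      (synchProd A T).HasTransAc (q₁, s₁) ac (q₂, t 0) ∧
      ∀ i < n, (synchProd A T).HasTransAc (q₂, t i) (αs i) (q₂, t (i + 1)) :=
  stmt10_general A T q₁ q₂ a₁ a₂ ac ht
end

section
/- Let A be a TGBA over AP' and T a Kripke structure over AP ⊇ AP'. If the Self-Loop Aggregation Product A⊠T has an accepting run, then the synchronized product A⊗T has an accepting run. -/
open scoped Classical

/-!
Each state of a successor aggregate in `A ⊠ T` is reached from some state of the preceding aggregate
by one transition of `A ⊗ T` with the same acceptance set, followed by finitely many self-loops of
`A`. Kőnig's lemma, applied to these backward links between finite nonempty aggregates along an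
accepting run of `A ⊠ T`, yields an infinite sequence of states of `A ⊗ T`, each joined to the next
by such a finite path. Concatenating the paths gives an accepting run, since the self-loops can only
add acceptance conditions.
-/

section Sequences

open Relation

variable {α : Type*} {r : α → α → Prop}

theorem existsUnique_mem_Ico_of_monotone [LinearOrder α] {φ : ℕ → α} (hφ : Monotone φ)
    (hunbdd : ¬BddAbove (Set.range φ)) {x : α} (hx : φ 0 ≤ x) :
    ∃! i, x ∈ Set.Ico (φ i) (φ (i + 1)) := by
  have hcover := iUnion_Ico_map_succ_eq_Ici (fun i => hφ (Nat.zero_le i)) hunbdd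
  obtain ⟨i, hi⟩ := Set.mem_iUnion.mp (hcover.symm ▸ Set.mem_Ici.mpr hx)
  exact ⟨i, hi, fun j hj => hφ.pairwise_disjoint_on_Ico_succ.eq
    (Set.not_disjoint_iff.mpr ⟨x, hj, hi⟩)⟩

theorem exists_path_of_transGen {a b : α} (h : TransGen r a b) :
    ∃ n > 0, ∃ f : ℕ → α, f 0 = a ∧ f n = b ∧ ∀ i < n, r (f i) (f (i + 1)) := by
  induction h using TransGen.head_induction_on with
  | @single a hab =>
    refine ⟨1, one_pos, fun i => i.casesOn a fun _ => b, rfl, rfl, fun i hi => ?_⟩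
    obtain rfl := Nat.lt_one_iff.mp hi
    exact hab
  | @head a c hac _ ih =>
    obtain ⟨n, -, f, rfl, hfn, hf⟩ := ih
    refine ⟨n + 1, n.succ_pos, fun i => i.casesOn a f, rfl, hfn, fun i hi => ?_⟩
    cases i with
    | zero => exact hac
    | succ i => exact hf i (Nat.succ_lt_succ_iff.mp hi)

theorem exists_seq_of_forall_transGen {t : ℕ → α} (h : ∀ i, TransGen r (t i) (t (i + 1))) :
    ∃ (π : ℕ → α) (φ : ℕ → ℕ), (∀ n, r (π n) (π (n + 1))) ∧ StrictMono φ ∧ φ 0 = 0 ∧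
      ∀ i, π (φ i) = t i := by
  choose len hlen f hstart hend hstep using fun i => exists_path_of_transGen (h i)
  obtain ⟨φ, h0, hsucc⟩ : ∃ φ : ℕ → ℕ, φ 0 = 0 ∧ ∀ i, φ (i + 1) = φ i + len i :=
    ⟨fun i => ∑ j ∈ Finset.range i, len j, rfl, Finset.sum_range_succ len⟩
  have hφ : StrictMono φ :=
    strictMono_nat_of_lt_succ fun i => (hsucc i).symm ▸ Nat.lt_add_of_pos_right (hlen i)
  choose block hblock block_unique using fun n : ℕ =>
    existsUnique_mem_Ico_of_monotone hφ.monotone hφ.not_bddAbove_range_of_isSuccArchimedean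
      (h0.trans_le n.zero_le)
  let π : ℕ → α := fun n => f (block n) (n - φ (block n))
  have hπ_of_lt {i j : ℕ} (hj : j < len i) : π (φ i + j) = f i j := by
    have hij : i = block (φ i + j) :=
      block_unique _ i ⟨Nat.le_add_right _ _, (hsucc i).symm ▸ Nat.add_lt_add_left hj _⟩
    simp only [π, ← hij, Nat.add_sub_cancel_left]
  have hπφ (i : ℕ) : π (φ i) = t i := (hπ_of_lt (hlen i)).trans (hstart i)
  have hπ_of_le {i j : ℕ} (hj : j ≤ len i) : π (φ i + j) = f i j := by
    rcases hj.lt_or_eq with hlt | rfl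
    · exact hπ_of_lt hlt
    · rw [← hsucc, hπφ, hend]
  refine ⟨π, φ, fun n => ?_, hφ, h0, hπφ⟩
  obtain ⟨hle, hlt⟩ := hblock n
  obtain ⟨j, hj⟩ := Nat.exists_eq_add_of_le hle
  have hj_lt : j < len (block n) := by have := hsucc (block n); omega
  rw [hj, add_assoc, hπ_of_le hj_lt.le, hπ_of_le hj_lt]
  exact hstep _ j hj_lt

open CategoryTheory Opposite in
theorem exists_seq_of_forall_exists_rel {X : ℕ → Type*} [∀ i, Finite (X i)]
    [∀ i, Nonempty (X i)] {R : ∀ i, X i → X (i + 1) → Prop} (hR : ∀ i y, ∃ x, R i x y) :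
    ∃ s : ∀ i, X i, ∀ i, R i (s i) (s (i + 1)) := by
  choose p hp using hR
  let F : ℕᵒᵖ ⥤ Type _ := Functor.ofOpSequence (X := X) fun i => TypeCat.ofHom (p i)
  have (j : ℕᵒᵖ) : Finite (F.obj j) := inferInstanceAs (Finite (X j.unop))
  have (j : ℕᵒᵖ) : Nonempty (F.obj j) := inferInstanceAs (Nonempty (X j.unop))
  obtain ⟨s, hs⟩ := nonempty_sections_of_finite_cofiltered_system F
  have hproj (i : ℕ) : p i (s (op (i + 1))) = s (op i) := by
    have h := hs (homOfLE (Nat.le_add_right i 1)).op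
    rwa [Functor.ofOpSequence_map_homOfLE_succ] at h
  refine ⟨fun i => s (op i), fun i => ?_⟩
  have hRi := hp i (s (op (i + 1)))
  rwa [hproj i] at hRi

end Sequences

namespace TGBA

open Relation

variable {α : Type} {B : TGBA α}

/-- `B.Next t t'`: the transition `t'` of `B` may follow `t` in a run. The predecessor `t` is not
required to be a transition of `B`. -/
def Next (B : TGBA α) (t t' : B.Q × BForm α × Set B.F × B.Q) : Prop :=
  t' ∈ B.δ ∧ t.2.2.2 = t'.1

/-- `B.StepReach ac q q'`: some transition of `B` with acceptance set `ac` leaves `q`, and `q'` is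
reachable from its target. -/
def StepReach (B : TGBA α) (ac : Set B.F) (q q' : B.Q) : Prop :=
  ∃ f p, (q, f, ac, p) ∈ B.δ ∧ B.Reach p q'

theorem transGen_next_of_reach {q p : B.Q} {f : BForm α} {ac : Set B.F}
    {t : B.Q × BForm α × Set B.F × B.Q} (ht : t ∈ B.δ) (h : B.Reach p t.1) :
    TransGen B.Next (q, f, ac, p) t := by
  induction h using ReflTransGen.head_induction_on generalizing q f ac with
  | refl => exact .single ⟨ht, rfl⟩
  | head hstep _ ih =>
    obtain ⟨g, ac', hδ⟩ := hstep
    exact .head ⟨hδ, rfl⟩ ih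

theorem hasAccRun_of_forall_stepReach {x : ℕ → B.Q} {ac : ℕ → Set B.F}
    (hinit : B.Reach B.init (x 0)) (hx : ∀ i, B.StepReach (ac i) (x i) (x (i + 1)))
    (hac : ∀ c, ∀ i, ∃ j, i ≤ j ∧ c ∈ ac j) : B.HasAccRun := by
  choose f p hδ hreach using hx
  -- A fictitious transition into `B.init` gives the first transition of the run a predecessor.
  let t : ℕ → B.Q × BForm α × Set B.F × B.Q := fun i =>
    i.casesOn (B.init, .tru, ∅, B.init) fun i => (x i, f i, ac i, p i)
  have ht (i : ℕ) : TransGen B.Next (t i) (t (i + 1)) := by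
    cases i with
    | zero => exact transGen_next_of_reach (hδ 0) hinit
    | succ i => exact transGen_next_of_reach (hδ (i + 1)) (hreach i)
  obtain ⟨π, φ, hπ, hφ, hφ0, hπφ⟩ := exists_seq_of_forall_transGen ht
  have hπ0 : π 0 = t 0 := (congrArg π hφ0).symm.trans (hπφ 0)
  refine ⟨fun n => π (n + 1), ⟨?_, fun n => ⟨(hπ n).1, (hπ (n + 1)).2⟩⟩, fun c i => ?_⟩
  · exact (hπ 0).2.symm.trans (congrArg (·.2.2.2) hπ0)
  · obtain ⟨j, hij, hc⟩ := hac c i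
    have hle : j + 1 ≤ φ (j + 1) := hφ.le_apply
    obtain ⟨m, hm⟩ := Nat.exists_eq_add_of_le' (Nat.le_of_add_left_le hle)
    have hπm : π (m + 1) = t (j + 1) := hm ▸ hπφ (j + 1)
    refine ⟨m, by omega, ?_⟩
    change c ∈ (π (m + 1)).2.2.1
    rwa [hπm]

end TGBA

section SelfLoopAggregation

variable {α : Type} {A : TGBA α} {T : Kripke α}

theorem mem_synchProd_δ {q q' : A.Q} {s s' : T.S} {f : BForm α} {ac : Set A.F}
    (hδ : (q, f, ac, q') ∈ A.δ) (hΔ : (s, s') ∈ T.Δ) (hf : f.eval (T.lab s) = true) :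
    ((q, s), assignForm T.AP (T.lab s), ac, (q', s')) ∈ (synchProd A T).δ :=
  ⟨q, q', s, s', ac, rfl, hΔ, f, hδ, hf⟩

theorem exists_reach_of_mem_FReach {q : A.Q} {ac : Set A.F} {b : Set T.S} {s : T.S}
    (hs : s ∈ T.FReach b (SFpred A q ac)) :
    ∃ u ∈ b, (synchProd A T).Reach (q, u) (q, s) := by
  refine hs {s | ∃ u ∈ b, (synchProd A T).Reach (q, u) (q, s)} ⟨fun u hu => ⟨u, hu, .refl⟩, ?_⟩
  rintro s' ⟨s, ⟨u, hu, hreach⟩, hΔ, f, ac', hδ, -, hf⟩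
  exact ⟨u, hu, hreach.tail ⟨_, ac', mem_synchProd_δ hδ hΔ hf⟩⟩

theorem reach_of_mem_SLAP_init {s : T.S} (hs : s ∈ (SLAP A T).init.2) :
    (synchProd A T).Reach (synchProd A T).init ((SLAP A T).init.1, s) := by
  obtain ⟨_, rfl, hreach⟩ := exists_reach_of_mem_FReach hs
  exact hreach

theorem nonempty_of_mem_SLAP_δ {q q' : A.Q} {a a' : Set T.S} {f : BForm α} {ac : Set A.F}
    (ht : ((q, a), f, ac, (q', a')) ∈ (SLAP A T).δ) : a.Nonempty := by
  obtain ⟨_, _, _, _, _, heq, hne, -⟩ := ht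
  cases heq
  exact hne

theorem exists_stepReach_of_mem_SLAP_δ {q q' : A.Q} {a a' : Set T.S} {f : BForm α} {ac : Set A.F}
    (ht : ((q, a), f, ac, (q', a')) ∈ (SLAP A T).δ) {s' : T.S} (hs' : s' ∈ a') :
    ∃ s ∈ a, (synchProd A T).StepReach ac (q, s) (q', s') := by
  obtain ⟨_, _, _, _, _, heq, -, -, g, hδ, -, rfl⟩ := ht
  cases heq
  obtain ⟨u, ⟨s, hs, hΔ, hg⟩, hreach⟩ := exists_reach_of_mem_FReach hs'
  exact ⟨s, hs, _, _, mem_synchProd_δ hδ hΔ hg, hreach⟩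

end SelfLoopAggregation

theorem stmt11_general {α : Type} (A : TGBA α) (T : Kripke α) [Finite T.S] :
    (SLAP A T).HasAccRun → (synchProd A T).HasAccRun := by
  rintro ⟨π, ⟨hinit, hrun⟩, hacc⟩
  have hδ (i : ℕ) : ((π i).1, (π i).2.1, (π i).2.2.1, (π (i + 1)).1) ∈ (SLAP A T).δ :=
    (hrun i).2 ▸ (hrun i).1
  have (i : ℕ) : Nonempty (π i).1.2 := (nonempty_of_mem_SLAP_δ (hδ i)).to_subtype
  obtain ⟨s, hs⟩ := exists_seq_of_forall_exists_rel (X := fun i => (π i).1.2)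
    (R := fun i s s' =>
      (synchProd A T).StepReach (π i).2.2.1 ((π i).1.1, s.1) ((π (i + 1)).1.1, s'.1))
    fun i s' =>
      let ⟨s, hsa, hss'⟩ := exists_stepReach_of_mem_SLAP_δ (hδ i) s'.2
      ⟨⟨s, hsa⟩, hss'⟩
  have hreach_init : ∀ s ∈ (π 0).1.2,
      (synchProd A T).Reach (synchProd A T).init ((π 0).1.1, s) := by
    rw [hinit]
    exact fun s => reach_of_mem_SLAP_init
  exact TGBA.hasAccRun_of_forall_stepReach (hreach_init _ (s 0).2) hs hacc

/-- If the Self-Loop Aggregation Product `A ⊠ T` has an accepting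
run, then the synchronized product `A ⊗ T` has an accepting run. -/
theorem stmt11 {α : Type} (A : TGBA α) (T : Kripke α)
    [Finite A.Q] [Finite A.F] [Nonempty A.F] [Finite T.S]
    (hwf : A.WF) (hAP : A.AP ⊆ T.AP) :
    (SLAP A T).HasAccRun → (synchProd A T).HasAccRun :=
  stmt11_general A T
end
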